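/- Let R be an integral domain and {X_α} a (possibly infinite) family of independent indeterminates over R. The following statements are equivalent: (1) R[{X_α}] is a t#-domain; (2) R({X_α}) is a t#-domain; (3) R⟨{X_α}⟩ is a t#-domain. If, in addition, R[{X_α}] is v-coherent, then these conditions are each equivalent to: R is a t#-domain. -/

import Mathlib

/-!
Write `X` for the family of indeterminates and `S` for the set of nonzero `s ∈ R[X]` with
`c(s)_v = R` (the submonoid `regularContent`).

Writing elements of the quotient field of a domain `A` as fractions `z / x`, membership in a
`v`-closure and in a localization `A_M` become statements about divisibility in `A`. The domain `A`
is `t#` iff for each maximal `t`-ideal `M` there is a fraction outside `A_M` that lies in `A_N` for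
every other maximal `t`-ideal `N` (`isTSharp_iff`); this is the condition `SharpAt`.

The maximal `t`-ideals of `R[X]` are of two kinds.

* Those disjoint from `S` are the extensions `M[X]` of the maximal `t`-ideals `M` of `R`
  (`exists_eq_map`, `map_mem_tMaxOff`). By McCoy's theorem over the rings `R / a`, an element of `S`
  is a nonzerodivisor modulo every nonzero `a ∈ R` (`mem_regularContent`).
* Those meeting `S` are the prime `t`-ideals meeting `S`. Such a `Q` is an upper to zero and equals
  `p K[X] ∩ R[X]` for a prime `p` of the factorial ring `K[X]` (`mem_iff_dvd`). It is separated from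
  all other maximal `t`-ideals by a fraction `a / p` with `0 ≠ a ∈ R`. Moreover, any fraction can be
  multiplied by an element of `S` so as to become integral at all ideals of this kind
  (`exists_dvd_mul`).

So the `t#`-property of `R[X]` only concerns the ideals `M[X]` (`forall_sharpAt_iff`). These survive
in every localization at a multiplicative subset of `S`, and there the same analysis applies
(`isTSharp_localization`, `isTSharp_iff_of_le`). This gives the equivalence of the first three
conditions. The case where `R` is a field is special for `R⟨X⟩`: then `0_v = R`, so `R⟨X⟩` is the
zero ring, while all three conditions hold.

A fraction separating `M` in `R` also separates `M[X]` in `R[X]`. Conversely, if `R[X]` is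
`v`-coherent, the conductor of a fraction separating `M[X]` is `F_v` for a finite set `F`, and the
finite set of coefficients of `F` is contained in `M` and in no other maximal `t`-ideal
(`isTSharp_of_isVCoherent`), which suffices (`sharpAt_of_finite`).
-/

/-
Definitions following S. Gabelli, E. Houston, T. G. Lucas,
"The t#-property for integral domains".

All the star-operation notions (`v`, `t`, maximal `t`-ideals, etc.) are defined for a
commutative ring `R` via its total quotient field `FractionRing R`; in all theorems `R`
is assumed to be an integral domain, so `FractionRing R` is its quotient field `K`.
-/

noncomputable section

namespace TSharpPaper

variable (R : Type*) [CommRing R]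

/-- The image of an integral ideal in the quotient field, as an `R`-submodule. -/
def idealSub (I : Ideal R) : Submodule R (FractionRing R) :=
  Submodule.map (Algebra.linearMap R (FractionRing R)) I

/-- The divisorial closure `I_v = (I⁻¹)⁻¹` of an integral ideal, as an integral ideal.
Here for a submodule `J` of `K`, `1 / J = {x ∈ K : xJ ⊆ R}` is `J⁻¹`. -/
def vIdeal (I : Ideal R) : Ideal R :=
  Submodule.comap (Algebra.linearMap R (FractionRing R))
    ((1 : Submodule R (FractionRing R)) / (1 / idealSub R I))

/-- The `t`-closure `I_t = ⋃ J_v`, the union over all nonzero finitely generated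
subideals `J` of `I`. -/
def tIdeal (I : Ideal R) : Ideal R :=
  ⨆ (J : Ideal R) (_ : J.FG) (_ : J ≠ ⊥) (_ : J ≤ I), vIdeal R J

/-- A (nonzero) integral ideal is divisorial if `I = I_v`. -/
def IsDivisorialIdeal (I : Ideal R) : Prop := I ≠ ⊥ ∧ vIdeal R I = I

/-- A (nonzero) integral ideal is a `t`-ideal if `I = I_t`. -/
def IsTIdeal (I : Ideal R) : Prop := I ≠ ⊥ ∧ tIdeal R I = I

/-- A `t`-prime is a prime `t`-ideal. -/
def IsTPrime (P : Ideal R) : Prop := P.IsPrime ∧ IsTIdeal R P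

/-- The set `t-Max(R)` of maximal `t`-ideals: integral ideals maximal among proper
integral `t`-ideals. -/
def tMax : Set (Ideal R) :=
  {M | IsTIdeal R M ∧ M ≠ ⊤ ∧ ∀ J : Ideal R, IsTIdeal R J → J ≠ ⊤ → M ≤ J → J = M}

/-- The localization `R_P` of `R` at (the complement of) a prime `P`, viewed as a subset
of the quotient field. -/
def locSet (P : Ideal R) : Set (FractionRing R) :=
  {x | ∃ r s : R, s ∉ P ∧ x * algebraMap R (FractionRing R) s = algebraMap R (FractionRing R) r}

/-- The image of `R` in its quotient field. -/
def imageR : Set (FractionRing R) := Set.range (algebraMap R (FractionRing R))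

/-- `R` is a `t#`-domain if `⋂_{M ∈ 𝔐₁} R_M ≠ ⋂_{M ∈ 𝔐₂} R_M` for any two distinct
subsets `𝔐₁, 𝔐₂` of `t-Max(R)`. -/
def IsTSharp : Prop :=
  ∀ 𝔐₁ 𝔐₂ : Set (Ideal R), 𝔐₁ ⊆ tMax R → 𝔐₂ ⊆ tMax R → 𝔐₁ ≠ 𝔐₂ →
    (⋂ M ∈ 𝔐₁, locSet R M) ≠ ⋂ M ∈ 𝔐₂, locSet R M

/-- The conductor `(R :_R u) = {r ∈ R : r·u ∈ R}` of an element `u` of the quotient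
field. -/
def colonIdeal (u : FractionRing R) : Ideal R :=
  Submodule.comap (Algebra.linearMap R (FractionRing R))
    (Submodule.comap (LinearMap.mulLeft R u) (1 : Submodule R (FractionRing R)))

/-- `R` is `v`-coherent if for each nonzero finitely generated ideal `I` of `R`,
`I⁻¹ = J_v` for some finitely generated fractional ideal `J`. -/
def IsVCoherent : Prop :=
  ∀ I : Ideal R, I ≠ ⊥ → I.FG →
    ∃ J : Submodule R (FractionRing R), J.FG ∧
      (1 : Submodule R (FractionRing R)) / idealSub R I = 1 / (1 / J)

/-- An ideal is `v`-finite if it equals `J_v` for some finitely generated ideal `J`. -/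
def IsVFinite (I : Ideal R) : Prop := ∃ J : Ideal R, J.FG ∧ I = vIdeal R J

/-- `Φ(Λ)`: the set of all integral `t`-ideals `I` of `R` with `I ⊄ P` for every
`P ∈ Λ`. -/
def Phi (Λ : Set (Ideal R)) : Set (Ideal R) :=
  {I | IsTIdeal R I ∧ ∀ P ∈ Λ, ¬ I ≤ P}

/-- `Φ(Λ)` is `v`-finite if every `t`-ideal in `Φ(Λ)` contains a `v`-finite `t`-ideal
belonging to `Φ(Λ)`. -/
def PhiVFinite (Λ : Set (Ideal R)) : Prop :=
  ∀ I ∈ Phi R Λ, ∃ J ∈ Phi R Λ, J ≤ I ∧ IsVFinite R J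

/-- The generalized ring of quotients `R_{Φ(Λ)} = {x ∈ K : xI ⊆ R for some I ∈ Φ(Λ)}`. -/
def RPhi (Λ : Set (Ideal R)) : Set (FractionRing R) :=
  {x | ∃ I ∈ Phi R Λ, ∀ a ∈ I, x * algebraMap R (FractionRing R) a ∈ imageR R}

/-- `Λ` is a set of pairwise incomparable `t`-primes of `R`. -/
def IncompTPrimes (Λ : Set (Ideal R)) : Prop :=
  (∀ P ∈ Λ, IsTPrime R P) ∧ ∀ P ∈ Λ, ∀ Q ∈ Λ, P ≤ Q → P = Q

/-- `R` is a Prüfer `v`-multiplication domain if `R_M` is a valuation domain for every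
maximal `t`-ideal `M` of `R`. -/
def IsPVMD [IsDomain R] : Prop :=
  ∀ M ∈ tMax R, ∀ x : FractionRing R, x ≠ 0 → x ∈ locSet R M ∨ x⁻¹ ∈ locSet R M

/-- `R` is a Mori domain: the ascending chain condition holds on integral divisorial
ideals. -/
def IsMori : Prop :=
  ∀ f : ℕ → Ideal R, (∀ n, IsDivisorialIdeal R (f n)) → (∀ n, f n ≤ f (n + 1)) →
    ∃ n, ∀ m, n ≤ m → f m = f n

/-- The localization `T_Q` of a subring `T` of the quotient field of `R` at (the
complement of) an ideal `Q` of `T`, viewed as a subset of the quotient field of `R`. -/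
def locSetSub (T : Subring (FractionRing R)) (Q : Ideal T) : Set (FractionRing R) :=
  {x | ∃ r s : T, s ∉ Q ∧ x * (s : FractionRing R) = (r : FractionRing R)}

/-- `T` is an overring of `R`: a subring of the quotient field containing (the image
of) `R`. -/
def IsOverring (T : Subring (FractionRing R)) : Prop :=
  ∀ r : R, algebraMap R (FractionRing R) r ∈ T

/-- The canonical ring homomorphism from `R` to an overring `T`; `M ∩ R` is the
contraction `Ideal.comap (intoOverring R T h) M`. -/
def intoOverring (T : Subring (FractionRing R)) (h : IsOverring R T) : R →+* T :=
  (algebraMap R (FractionRing R)).codRestrict T h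

/-- `T` is a `t`-flat overring of `R`: `T_M = R_{M ∩ R}` for each maximal `t`-ideal `M`
of `T`. -/
def IsTFlat (T : Subring (FractionRing R)) : Prop :=
  ∃ h : IsOverring R T, ∀ M ∈ tMax (↥T),
    locSetSub R T M = locSet R (Ideal.comap (intoOverring R T h) M)

/-- `T` is `t`-linked over `R`: for each nonzero finitely generated ideal `I` of `R` with
`(R : I) = R` one has `(T : IT) = T`. -/
def IsTLinked (T : Subring (FractionRing R)) : Prop :=
  ∀ I : Ideal R, I ≠ ⊥ → I.FG →
    (1 : Submodule R (FractionRing R)) / idealSub R I = 1 →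
    {x : FractionRing R | ∀ a ∈ I, x * algebraMap R (FractionRing R) a ∈ T} =
      (T : Set (FractionRing R))

/-- `T` is a `t`-subintersection of `R`: `T = ⋂_{P ∈ Λ} R_P` for some set `Λ` of
`t`-primes of `R`. -/
def IsTSubintersection (T : Subring (FractionRing R)) : Prop :=
  ∃ Λ : Set (Ideal R), (∀ P ∈ Λ, IsTPrime R P) ∧
    (T : Set (FractionRing R)) = ⋂ P ∈ Λ, locSet R P

/-- `(P : P) = {x ∈ K : xP ⊆ P}`, as a subring of the quotient field of `R`. -/
def colonPP (P : Ideal R) : Subring (FractionRing R) where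
  carrier := {x | ∀ a ∈ P, x * algebraMap R (FractionRing R) a ∈ idealSub R P}
  one_mem' := by
    intro a ha
    rw [one_mul]
    exact Submodule.mem_map_of_mem ha
  mul_mem' := by
    intro x y hx hy a ha
    rcases hy a ha with ⟨b, hb, hby⟩
    rw [mul_assoc, ← hby]
    exact hx b hb
  add_mem' := by
    intro x y hx hy a ha
    rw [add_mul]
    exact Submodule.add_mem _ (hx a ha) (hy a ha)
  zero_mem' := by
    intro a ha
    rw [zero_mul]
    exact Submodule.zero_mem _
  neg_mem' := by
    intro x hx a ha
    rw [neg_mul]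
    exact Submodule.neg_mem _ (hx a ha)

/-- `R` is a `t#_P`-domain: for sets `Λ₁ ≠ Λ₂` of `t`-primes such that `(P + Q)_t = R`
for distinct `P ∈ Λ₁`, `Q ∈ Λ₂`, one has `R_{Φ(Λ₁)} ≠ R_{Φ(Λ₂)}`. -/
def IsTSharpP : Prop :=
  ∀ Λ₁ Λ₂ : Set (Ideal R), (∀ P ∈ Λ₁, IsTPrime R P) → (∀ Q ∈ Λ₂, IsTPrime R Q) →
    (∀ P ∈ Λ₁, ∀ Q ∈ Λ₂, P ≠ Q → tIdeal R (P ⊔ Q) = ⊤) →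
    Λ₁ ≠ Λ₂ → RPhi R Λ₁ ≠ RPhi R Λ₂

/-- A `t`-localizing system of ideals of `R`: a set of integral `t`-ideals closed under
`t`-multiplication and satisfying the two localizing-system closure properties. -/
def IsTLocalizingSystem (Φ : Set (Ideal R)) : Prop :=
  (∀ I ∈ Φ, IsTIdeal R I) ∧
  (∀ I ∈ Φ, ∀ J ∈ Φ, tIdeal R (I * J) ∈ Φ) ∧
  (∀ I ∈ Φ, ∀ J : Ideal R, IsTIdeal R J → I ≤ J → J ∈ Φ) ∧
  (∀ I ∈ Φ, ∀ J : Ideal R, IsTIdeal R J →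
    (∀ a ∈ I, tIdeal R (Submodule.colon J (Ideal.span {a})) ∈ Φ) → J ∈ Φ)

/-- The ascending chain condition on `t`-primes of `R`. -/
def ACCTPrimes : Prop :=
  ∀ f : ℕ → Ideal R, (∀ n, IsTPrime R (f n)) → (∀ n, f n ≤ f (n + 1)) →
    ∃ n, ∀ m, n ≤ m → f m = f n

/-- The ascending chain condition on radical `t`-ideals of `R`. -/
def ACCRadicalTIdeals : Prop :=
  ∀ f : ℕ → Ideal R, (∀ n, IsTIdeal R (f n) ∧ (f n).radical = f n) →
    (∀ n, f n ≤ f (n + 1)) → ∃ n, ∀ m, n ≤ m → f m = f n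

/-- A prime `P` is branched if there is a `PR_P`-primary ideal of `R_P` different from
`PR_P` (the maximal ideal of `R_P`). -/
def IsBranched (P : Ideal R) (hP : P.IsPrime) : Prop :=
  letI := hP
  ∃ Q : Ideal (Localization.AtPrime P), Q.IsPrimary ∧
    Q ≠ IsLocalRing.maximalIdeal (Localization.AtPrime P)

/-- A prime ideal of a domain has height one. -/
def HeightOne (Q : Ideal R) : Prop :=
  Q ≠ ⊥ ∧ ∀ P : Ideal R, P.IsPrime → P < Q → P = ⊥

/-- A nonzero integral ideal `I` is `t`-invertible: `(I I⁻¹)_t = R`. -/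
def IsTInvertible (I : Ideal R) : Prop :=
  tIdeal R (Submodule.comap (Algebra.linearMap R (FractionRing R))
    (idealSub R I * ((1 : Submodule R (FractionRing R)) / idealSub R I))) = ⊤

variable {σ : Type*}

/-- An upper to zero: a prime ideal `Q` of `R[{X_α}]` with `Q ∩ R = 0`. -/
def IsUpperToZero (Q : Ideal (MvPolynomial σ R)) : Prop :=
  Q.IsPrime ∧ Ideal.comap (MvPolynomial.C : R →+* MvPolynomial σ R) Q = ⊥

/-- The content `c(f)` of a polynomial: the ideal of `R` generated by its
coefficients. -/
def mvContent (f : MvPolynomial σ R) : Ideal R :=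
  Ideal.span (Set.range fun m => MvPolynomial.coeff m f)

/-- The content `c(I)` of an ideal of `R[{X_α}]`: the ideal of `R` generated by the
coefficients of all polynomials in `I`. -/
def mvContentIdeal (Q : Ideal (MvPolynomial σ R)) : Ideal R :=
  Ideal.span {r | ∃ f ∈ Q, ∃ m, MvPolynomial.coeff m f = r}

/-- `R({X_α})`: the localization of `R[{X_α}]` at the (multiplicatively closed) set of
polynomials of unit content. -/
def mvNagata (σ : Type*) : Type _ :=
  Localization (Submonoid.closure {f : MvPolynomial σ R | mvContent R f = ⊤})

instance (σ : Type*) : CommRing (mvNagata R σ) := by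
  unfold mvNagata; infer_instance

/-- `R⟨{X_α}⟩`: the localization of `R[{X_α}]` at the (multiplicatively closed) set
`S = {f : c(f)_v = R}`. -/
def mvKronecker (σ : Type*) : Type _ :=
  Localization (Submonoid.closure {f : MvPolynomial σ R | vIdeal R (mvContent R f) = ⊤})

instance (σ : Type*) : CommRing (mvKronecker R σ) := by
  unfold mvKronecker; infer_instance


section VClosure

/-! ### `t`-ideals and the `t#`-property in terms of divisibility -/

variable {A : Type*} [CommRing A]

/-- `y` lies in the divisorial closure of the ideal generated by `F`. Writing an element of the
quotient field as `z / x`, it lies in `(F)⁻¹` iff `x ∣ z * f` for all `f ∈ F`; this phrases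
`y ∈ F_v` with divisibilities in `A` only. -/
def VMem (F : Set A) (y : A) : Prop :=
  ∀ x z : A, x ≠ 0 → (∀ f ∈ F, x ∣ z * f) → x ∣ z * y

lemma VMem.trans {F G : Set A} {y : A} (hF : ∀ f ∈ F, VMem G f) (h : VMem F y) : VMem G y :=
  fun x z hx hG => h x z hx fun f hf => hF f hf x z hx hG

lemma vMem_of_mem {F : Set A} {y : A} (h : y ∈ F) : VMem F y :=
  fun _ _ _ hF => hF y h

lemma VMem.mono {F G : Set A} {y : A} (h : VMem F y) (hFG : F ⊆ G) : VMem G y :=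
  h.trans fun _ hf => vMem_of_mem (hFG hf)

lemma vMem_of_mem_span {F : Set A} {y : A} (h : y ∈ Ideal.span F) : VMem F y := by
  intro x z _ hF
  induction h using Submodule.span_induction with
  | mem f hf => exact hF f hf
  | zero => simp
  | add a b _ _ ha hb => rw [mul_add]; exact dvd_add ha hb
  | smul a b _ hb => rw [smul_eq_mul, mul_left_comm]; exact hb.mul_left a

lemma vMem_span {F : Set A} {y : A} : VMem (Ideal.span F : Set A) y ↔ VMem F y :=
  ⟨fun h => h.trans fun _ hf => vMem_of_mem_span hf, fun h => h.mono Ideal.subset_span⟩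

variable [IsDomain A]

lemma frac_mul_eq_iff {x z : A} (hx : x ≠ 0) {u : FractionRing A}
    (hu : u * algebraMap A (FractionRing A) x = algebraMap A (FractionRing A) z) (a r : A) :
    u * algebraMap A (FractionRing A) a = algebraMap A (FractionRing A) r ↔ z * a = x * r := by
  have hx' : algebraMap A (FractionRing A) x ≠ 0 := by
    simpa using hx
  rw [← (IsFractionRing.injective A (FractionRing A)).eq_iff, map_mul, map_mul, ← hu,
    ← mul_right_inj' hx']
  constructor <;> intro h <;> linear_combination h

lemma exists_frac (u : FractionRing A) : ∃ x z : A, x ≠ 0 ∧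
    u * algebraMap A (FractionRing A) x = algebraMap A (FractionRing A) z := by
  obtain ⟨z, x, hx, rfl⟩ := IsFractionRing.div_surjective (A := A) u
  have hx0 := nonZeroDivisors.ne_zero hx
  exact ⟨x, z, hx0, div_mul_cancel₀ _ (by simpa using hx0)⟩

lemma exists_frac' {x : A} (z : A) (hx : x ≠ 0) : ∃ u : FractionRing A,
    u * algebraMap A (FractionRing A) x = algebraMap A (FractionRing A) z :=
  ⟨_, div_mul_cancel₀ _ (by simpa using hx)⟩

lemma mem_one_div_idealSub {I : Ideal A} {x z : A} (hx : x ≠ 0) {u : FractionRing A}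
    (hu : u * algebraMap A (FractionRing A) x = algebraMap A (FractionRing A) z) :
    u ∈ (1 : Submodule A (FractionRing A)) / idealSub A I ↔ ∀ a ∈ I, x ∣ z * a := by
  rw [Submodule.mem_div_iff_forall_mul_mem]
  simp only [idealSub, Submodule.mem_map, Algebra.linearMap_apply, forall_exists_index, and_imp,
    forall_apply_eq_imp_iff₂, Submodule.mem_one]
  refine forall₂_congr fun a _ => ?_
  simp only [eq_comm (b := u * _), frac_mul_eq_iff hx hu]
  rfl

lemma mem_vIdeal_iff {J : Ideal A} {y : A} : y ∈ vIdeal A J ↔ VMem (J : Set A) y := by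
  rw [vIdeal, Submodule.mem_comap, Submodule.mem_div_iff_forall_mul_mem]
  simp only [Algebra.linearMap_apply, Submodule.mem_one]
  constructor
  · intro h x z hx hJ
    obtain ⟨u, hu⟩ := exists_frac' z hx
    obtain ⟨r, hr⟩ := h u ((mem_one_div_idealSub hx hu).2 hJ)
    rw [mul_comm, eq_comm, frac_mul_eq_iff hx hu] at hr
    exact ⟨r, hr⟩
  · intro h u hu'
    obtain ⟨x, z, hx, hu⟩ := exists_frac u
    obtain ⟨r, hr⟩ := h x z hx ((mem_one_div_idealSub hx hu).1 hu')
    refine ⟨r, ?_⟩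
    rw [mul_comm, eq_comm, frac_mul_eq_iff hx hu, hr]

/-- A nonzero ideal is a `t`-ideal iff it contains the `v`-closure of each of its finite
subsets. -/
lemma isTIdeal_iff {I : Ideal A} : IsTIdeal A I ↔
    I ≠ ⊥ ∧ ∀ F : Set A, F.Finite → F ⊆ I → ∀ y, VMem F y → y ∈ I := by
  refine and_congr_right fun hI => ⟨fun h F hF hFI y hy => ?_, fun h => le_antisymm ?_ ?_⟩
  · -- adjoining a nonzero element of `I` to `F` makes the subideal nonzero
    obtain ⟨a, haI, ha⟩ := Submodule.exists_mem_ne_zero_of_ne_bot hI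
    have hle : vIdeal A (Ideal.span (insert a F)) ≤ tIdeal A I := by
      refine le_iSup_of_le (Ideal.span (insert a F)) (le_iSup_of_le
        ⟨(hF.insert a).toFinset, by simp⟩ (le_iSup_of_le (fun h0 => ha ?_)
        (le_iSup_of_le (Ideal.span_le.2 (Set.insert_subset haI hFI)) le_rfl)))
      have : a ∈ Ideal.span (insert a F) := Ideal.subset_span (Set.mem_insert a F)
      rwa [h0, Ideal.mem_bot] at this
    rw [← h]
    exact hle (mem_vIdeal_iff.2 (vMem_span.2 (hy.mono (Set.subset_insert a F))))
  · refine iSup_le fun J => iSup_le fun hJ => iSup_le fun _ => iSup_le fun hJI => ?_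
    obtain ⟨F, rfl⟩ := hJ
    intro y hy
    exact h F F.finite_toSet (fun f hf => hJI (Ideal.subset_span hf)) y
      (vMem_span.1 (mem_vIdeal_iff.1 hy))
  · intro y hy
    by_cases hy0 : y = 0
    · rw [hy0]; exact zero_mem _
    have hle : vIdeal A (Ideal.span {y}) ≤ tIdeal A I :=
      le_iSup_of_le (Ideal.span {y}) (le_iSup_of_le ⟨{y}, by simp⟩ (le_iSup_of_le
        (fun h0 => hy0 (Ideal.span_singleton_eq_bot.1 h0))
        (le_iSup_of_le ((Ideal.span_singleton_le_iff_mem I).2 hy) le_rfl)))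
    exact hle (mem_vIdeal_iff.2 (vMem_of_mem (Ideal.mem_span_singleton_self y)))

/-- The conductor `(A : z / x)` is a `t`-ideal. -/
lemma isTIdeal_conductor {x : A} (hx : x ≠ 0) (z : A) {I : Ideal A}
    (hI : ∀ s, s ∈ I ↔ x ∣ z * s) : IsTIdeal A I := by
  refine isTIdeal_iff.2 ⟨fun h => hx ?_, fun F _ hFI y hy =>
    (hI y).2 (hy x z hx fun f hf => (hI f).1 (hFI hf))⟩
  rw [← Ideal.mem_bot, ← h, hI]
  exact dvd_mul_left x z

/-- Every proper `t`-ideal lies in a maximal `t`-ideal (Zorn's lemma). -/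
lemma exists_le_tMax {I : Ideal A} (hI : IsTIdeal A I) (hI1 : I ≠ ⊤) :
    ∃ M ∈ tMax A, I ≤ M := by
  obtain ⟨M, hIM, hM⟩ := zorn_le_nonempty₀ {J : Ideal A | IsTIdeal A J ∧ J ≠ ⊤} (by
    intro c hc hchain J hJ
    have hdir : DirectedOn (· ≤ ·) c := hchain.directedOn
    have hmem : ∀ y, y ∈ sSup c ↔ ∃ J ∈ c, y ∈ J := fun y =>
      Submodule.mem_sSup_of_directed ⟨J, hJ⟩ hdir
    refine ⟨sSup c, ⟨isTIdeal_iff.2 ⟨fun h => ?_, fun F hF hFc y hy => ?_⟩, fun h => ?_⟩,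
      fun J hJ => le_sSup hJ⟩
    · exact (hc hJ).1.1 (le_bot_iff.1 (h ▸ le_sSup hJ))
    · have : ∃ J' ∈ c, F ⊆ J' := by
        clear hy
        induction F, hF using Set.Finite.induction_on with
        | empty => exact ⟨J, hJ, Set.empty_subset _⟩
        | @insert a s _ _ ih =>
          obtain ⟨J₁, hJ₁, h₁⟩ := ih fun _ hb => hFc (Set.mem_insert_of_mem _ hb)
          obtain ⟨J₂, hJ₂, h₂⟩ := (hmem a).1 (hFc (Set.mem_insert a _))
          obtain ⟨J₃, hJ₃, h₁₃, h₂₃⟩ := hdir J₁ hJ₁ J₂ hJ₂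
          exact ⟨J₃, hJ₃, Set.insert_subset (h₂₃ h₂) fun _ hb => h₁₃ (h₁ hb)⟩
      obtain ⟨J', hJ', hF'⟩ := this
      exact (hmem y).2 ⟨J', hJ', (isTIdeal_iff.1 (hc hJ').1).2 F hF hF' y hy⟩
    · obtain ⟨J', hJ', h1⟩ := (hmem 1).1 (h ▸ Submodule.mem_top)
      exact (hc hJ').2 ((Ideal.eq_top_iff_one _).2 h1)) I ⟨hI, hI1⟩
  exact ⟨M, ⟨hM.prop.1, hM.prop.2, fun J hJ hJ1 hMJ => (hM.eq_of_le ⟨hJ, hJ1⟩ hMJ).symm⟩, hIM⟩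

/-- Maximal `t`-ideals are prime: for `b ∉ M` the `t`-ideal `(M : a)` strictly contains `M`
whenever `a * b ∈ M`, so it is the unit ideal. -/
lemma tMax_isPrime {M : Ideal A} (hM : M ∈ tMax A) : M.IsPrime := by
  refine ⟨hM.2.1, fun {a b} hab => or_iff_not_imp_right.2 fun hb => ?_⟩
  set J : Ideal A := Submodule.comap (LinearMap.mulLeft A a) M with hJ
  have hmem : ∀ c, c ∈ J ↔ a * c ∈ M := fun c => Iff.rfl
  have hMJ : M ≤ J := fun c hc => (hmem c).2 (M.mul_mem_left a hc)
  have hJt : IsTIdeal A J := by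
    refine isTIdeal_iff.2 ⟨fun h => hM.1.1 (le_bot_iff.1 (h ▸ hMJ)), fun F hF hFJ y hy => ?_⟩
    refine (isTIdeal_iff.1 hM.1).2 ((a * ·) '' F) (hF.image _) ?_ (a * y) ?_
    · rintro _ ⟨f, hf, rfl⟩
      exact hFJ hf
    · intro x z hx h
      rw [← mul_assoc]
      refine hy x (z * a) hx fun f hf => ?_
      rw [mul_assoc]
      exact h _ ⟨f, hf, rfl⟩
  by_contra ha
  have h1 : J ≠ ⊤ := fun h => ha (by simpa using (hmem 1).1 (h ▸ Submodule.mem_top))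
  exact hb (hM.2.2 J hJt h1 hMJ ▸ (hmem b).2 hab)

/-- A set with no finite subset of trivial `v`-closure lies in a maximal `t`-ideal, namely in one
containing its `t`-closure. -/
lemma exists_tMax_of_set (W : Set A) (hW : ∃ a ∈ W, a ≠ 0)
    (h1 : ∀ G : Set A, G.Finite → G ⊆ W → ¬ VMem G 1) : ∃ M ∈ tMax A, W ⊆ M := by
  let E : Ideal A :=
    { carrier := {c | ∃ G : Set A, G.Finite ∧ G ⊆ W ∧ VMem G c}
      zero_mem' := ⟨∅, Set.finite_empty, Set.empty_subset _, fun x z _ _ => by simp⟩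
      add_mem' := by
        rintro a b ⟨G, hG, hGW, ha⟩ ⟨H, hH, hHW, hb⟩
        refine ⟨G ∪ H, hG.union hH, Set.union_subset hGW hHW, fun x z hx h => ?_⟩
        rw [mul_add]
        exact dvd_add (ha x z hx fun f hf => h f (Or.inl hf))
          (hb x z hx fun f hf => h f (Or.inr hf))
      smul_mem' := by
        rintro r a ⟨G, hG, hGW, ha⟩
        refine ⟨G, hG, hGW, fun x z hx h => ?_⟩
        rw [smul_eq_mul, mul_left_comm]
        exact (ha x z hx h).mul_left r }
  have hE : ∀ c, c ∈ E ↔ ∃ G : Set A, G.Finite ∧ G ⊆ W ∧ VMem G c := fun c => Iff.rfl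
  have hWE : W ⊆ E := fun w hw =>
    (hE w).2 ⟨{w}, Set.finite_singleton w, Set.singleton_subset_iff.2 hw, vMem_of_mem rfl⟩
  have hEt : IsTIdeal A E := by
    refine isTIdeal_iff.2 ⟨fun h => ?_, fun F hF hFE y hy => ?_⟩
    · obtain ⟨a, ha, ha0⟩ := hW
      have := hWE ha
      rw [h] at this
      exact ha0 this
    · choose! G hG hGW hGv using fun f (hf : f ∈ F) => (hE f).1 (hFE hf)
      exact ⟨⋃ f ∈ F, G f, hF.biUnion hG, Set.iUnion₂_subset hGW,
        hy.trans fun f hf => (hGv f hf).mono (Set.subset_biUnion_of_mem (u := G) hf)⟩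
  obtain ⟨M, hM, hEM⟩ := exists_le_tMax hEt fun h => by
    obtain ⟨G, hG, hGW, hv⟩ := (hE 1).1 (h ▸ Submodule.mem_top)
    exact h1 G hG hGW hv
  exact ⟨M, hM, hWE.trans hEM⟩

/-- The fraction `z / x` is outside `A_M` but inside `A_N` for all other `N ∈ P`, expressed through
the conductor `(A : z / x)`. -/
def SharpAt (P : Set (Ideal A)) (M : Ideal A) : Prop :=
  ∃ x z : A, x ≠ 0 ∧ (∀ s, x ∣ z * s → s ∈ M) ∧ ∀ N ∈ P, N ≠ M → ∃ s, s ∉ N ∧ x ∣ z * s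

lemma mem_locSet_iff {P : Ideal A} {x z : A} (hx : x ≠ 0) {u : FractionRing A}
    (hu : u * algebraMap A (FractionRing A) x = algebraMap A (FractionRing A) z) :
    u ∈ locSet A P ↔ ∃ s, s ∉ P ∧ x ∣ z * s := by
  simp only [locSet, Set.mem_ofPred_eq, frac_mul_eq_iff hx hu]
  exact ⟨fun ⟨r, s, hs, h⟩ => ⟨s, hs, r, h⟩, fun ⟨s, hs, r, h⟩ => ⟨r, s, hs, h⟩⟩

/-- It suffices to separate `t-Max(A)` from each `t-Max(A) \ {M}`. -/
lemma isTSharp_iff : IsTSharp A ↔ ∀ M ∈ tMax A, SharpAt (tMax A) M := by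
  constructor
  · intro h M hM
    have hne := h (tMax A) (tMax A \ {M}) subset_rfl Set.sdiff_subset fun h => (h ▸ hM).2 rfl
    have hsub : (⋂ N ∈ tMax A, locSet A N) ⊆ ⋂ N ∈ tMax A \ {M}, locSet A N :=
      Set.biInter_subset_biInter_left Set.sdiff_subset
    obtain ⟨u, hu, huM⟩ := Set.exists_of_ssubset (hsub.ssubset_of_ne hne)
    have hu' : ∀ N ∈ tMax A, N ≠ M → u ∈ locSet A N := fun N hN hNM =>
      Set.mem_iInter₂.1 hu N ⟨hN, hNM⟩
    have huM' : u ∉ locSet A M := fun h' => huM <| Set.mem_iInter₂.2 fun N hN => by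
      by_cases hNM : N = M
      · rwa [hNM]
      · exact hu' N hN hNM
    obtain ⟨x, z, hx, hxz⟩ := exists_frac u
    refine ⟨x, z, hx, fun s hs => ?_, fun N hN hNM => (mem_locSet_iff hx hxz).1 (hu' N hN hNM)⟩
    by_contra hsM
    exact huM' ((mem_locSet_iff hx hxz).2 ⟨s, hsM, hs⟩)
  · intro h
    have key : ∀ 𝔐₁ 𝔐₂ : Set (Ideal A), 𝔐₁ ⊆ tMax A → 𝔐₂ ⊆ tMax A →
        (⋂ M ∈ 𝔐₂, locSet A M) ⊆ (⋂ M ∈ 𝔐₁, locSet A M) → 𝔐₁ ⊆ 𝔐₂ := by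
      intro 𝔐₁ 𝔐₂ h₁ h₂ hsub M hM
      by_contra hM₂
      obtain ⟨x, z, hx, hxM, hN⟩ := h M (h₁ hM)
      obtain ⟨u, hu⟩ := exists_frac' z hx
      have hu₂ : u ∈ ⋂ M ∈ 𝔐₂, locSet A M := Set.mem_iInter₂.2 fun N hN₂ =>
        (mem_locSet_iff hx hu).2 (hN N (h₂ hN₂) fun h => hM₂ (h ▸ hN₂))
      obtain ⟨s, hs, hxs⟩ := (mem_locSet_iff hx hu).1 (Set.mem_iInter₂.1 (hsub hu₂) M hM)
      exact hs (hxM s hxs)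
    exact fun 𝔐₁ 𝔐₂ h₁ h₂ hne heq =>
      hne ((key _ _ h₁ h₂ heq.ge).antisymm (key _ _ h₂ h₁ heq.le))

/-- A finite set contained in `M` and in no other maximal `t`-ideal yields a separating fraction:
any element of `G⁻¹` outside `A` will do. -/
lemma sharpAt_of_finite {M : Ideal A} (hM : M ∈ tMax A) {G : Set A} (hG : G.Finite) (hGM : G ⊆ M)
    (hN : ∀ N ∈ tMax A, N ≠ M → ¬ G ⊆ N) : SharpAt (tMax A) M := by
  have h1 : ¬ VMem G 1 := fun h =>
    hM.2.1 ((Ideal.eq_top_iff_one M).2 ((isTIdeal_iff.1 hM.1).2 G hG hGM 1 h))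
  simp only [VMem, not_forall] at h1
  obtain ⟨x, z, hx, hxG, hxz⟩ := h1
  have hN' : ∀ N ∈ tMax A, N ≠ M → ∃ s, s ∉ N ∧ x ∣ z * s := fun N hN₁ hNM => by
    obtain ⟨g, hg, hgN⟩ := Set.not_subset.1 (hN N hN₁ hNM)
    exact ⟨g, hgN, hxG g hg⟩
  refine ⟨x, z, hx, fun s hs => ?_, hN'⟩
  by_contra hsM
  let I : Ideal A := Submodule.comap (LinearMap.mulLeft A z) (Ideal.span {x})
  have hI : ∀ s, s ∈ I ↔ x ∣ z * s := fun s => Ideal.mem_span_singleton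
  obtain ⟨N, hN₁, hIN⟩ := exists_le_tMax (isTIdeal_conductor hx z hI) fun h =>
    hxz ((hI 1).1 (h ▸ Submodule.mem_top))
  by_cases hNM : N = M
  · exact hsM (hNM ▸ hIN ((hI s).2 hs))
  · obtain ⟨t, ht, hxt⟩ := hN' N hN₁ hNM
    exact ht (hIN ((hI t).2 hxt))

/-- Over a `v`-coherent domain the conductor `(A : z / x)` is the `v`-closure of a finite set. -/
lemma IsVCoherent.conductor (h : IsVCoherent A) {x : A} (hx : x ≠ 0) (z : A) :
    ∃ F : Set A, F.Finite ∧ (∀ f ∈ F, x ∣ z * f) ∧ ∀ s, x ∣ z * s → VMem F s := by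
  have hI0 : Ideal.span ({x, z} : Set A) ≠ ⊥ := fun h0 => hx <| by
    rw [← Ideal.mem_bot, ← h0]; exact Ideal.subset_span (by simp)
  obtain ⟨J, ⟨S, rfl⟩, hJ⟩ := h (Ideal.span {x, z}) hI0 ⟨(Set.toFinite {x, z}).toFinset, by simp⟩
  have hx' : algebraMap A (FractionRing A) x ≠ 0 := by simpa using hx
  -- `(x, z)⁻¹ = x⁻¹ (A : z / x)`
  have hinv : ∀ (s : A) (u : FractionRing A),
      u * algebraMap A _ x = algebraMap A _ s →
      (u ∈ (1 : Submodule A (FractionRing A)) / idealSub A (Ideal.span {x, z}) ↔ x ∣ z * s) := by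
    intro s u hu
    rw [mem_one_div_idealSub hx hu]
    refine ⟨fun h => mul_comm s z ▸ h z (Ideal.subset_span (by simp)), fun h a ha => ?_⟩
    obtain ⟨b, c, rfl⟩ := Ideal.mem_span_pair.1 ha
    rw [mul_add]
    refine dvd_add ⟨s * b, by ring⟩ ?_
    rw [mul_left_comm, mul_comm s z]
    exact h.mul_left c
  have hSJ : ∀ j ∈ S, j ∈ (1 : Submodule A (FractionRing A)) /
      idealSub A (Ideal.span {x, z}) := by
    intro j hj
    rw [hJ, Submodule.mem_div_iff_forall_mul_mem]
    intro v hv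
    rw [mul_comm]
    exact Submodule.mem_div_iff_forall_mul_mem.1 hv j (Submodule.subset_span hj)
  have hex : ∀ j ∈ S, ∃ f : A, j * algebraMap A _ x = algebraMap A _ f := by
    intro j hj
    obtain ⟨r, hr⟩ := Submodule.mem_one.1 <|
      Submodule.mem_div_iff_forall_mul_mem.1 (hSJ j hj) (algebraMap A _ x)
        (Submodule.mem_map_of_mem (Ideal.subset_span (by simp)))
    exact ⟨r, hr.symm⟩
  choose! φ hφ using hex
  refine ⟨φ '' S, S.finite_toSet.image φ, ?_, fun s hs a b ha hab => ?_⟩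
  · rintro _ ⟨j, hj, rfl⟩
    exact (hinv _ j (hφ j hj)).1 (hSJ j hj)
  · obtain ⟨u, hu⟩ := exists_frac' s hx
    obtain ⟨v, hv⟩ := exists_frac' b ha
    have huJ := (hinv s u hu).2 hs
    rw [hJ, Submodule.mem_div_iff_forall_mul_mem] at huJ
    have hvJ : v * algebraMap A _ x ∈
        (1 : Submodule A (FractionRing A)) / Submodule.span A (S : Set (FractionRing A)) := by
      rw [Submodule.mem_div_iff_forall_mul_mem]
      intro j hj
      induction hj using Submodule.span_induction with
      | mem j hj =>
        obtain ⟨r, hr⟩ := hab _ ⟨j, hj, rfl⟩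
        rw [mul_assoc, mul_comm _ j, hφ j hj, (frac_mul_eq_iff ha hv _ r).2 hr]
        exact Submodule.mem_one.2 ⟨r, rfl⟩
      | zero => rw [mul_zero]; exact zero_mem _
      | add j k _ _ hj hk => rw [mul_add]; exact add_mem hj hk
      | smul c j _ hj => rw [mul_smul_comm]; exact Submodule.smul_mem _ c hj
    obtain ⟨r, hr⟩ := Submodule.mem_one.1 (huJ _ hvJ)
    refine ⟨r, (frac_mul_eq_iff ha hv s r).1 ?_⟩
    rw [← hu, hr]
    ring

end VClosure

section Localize

/-! ### The `t#`-property of a localization -/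

variable {A : Type*} [CommRing A]

/-- The maximal `t`-ideals of `A` disjoint from `T`. -/
def tMaxOff (T : Submonoid A) : Set (Ideal A) :=
  {Q | Q ∈ tMax A ∧ ∀ t ∈ T, t ∉ Q}

variable {B : Type*} [CommRing B] [Algebra A B]

lemma loc_dvd_iff (T : Submonoid A) [IsLocalization T B] {x y : A} :
    algebraMap A B x ∣ algebraMap A B y ↔ ∃ t ∈ T, x ∣ y * t := by
  constructor
  · rintro ⟨b, hb⟩
    obtain ⟨⟨w, t⟩, hw⟩ := IsLocalization.surj T b
    have h : algebraMap A B (y * t) = algebraMap A B (x * w) := by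
      rw [map_mul, map_mul, hb, ← hw, mul_assoc]
    obtain ⟨c, hc⟩ := (IsLocalization.eq_iff_exists T B).1 h
    exact ⟨c * t, (c * t).2, w * c, by linear_combination hc⟩
  · rintro ⟨t, ht, h⟩
    have := map_dvd (algebraMap A B) h
    rw [map_mul] at this
    exact (IsLocalization.map_units B (⟨t, ht⟩ : T)).dvd_mul_right.1 this

lemma exists_associated (T : Submonoid A) [IsLocalization T B] (b : B) :
    ∃ a : A, Associated b (algebraMap A B a) := by
  obtain ⟨⟨a, t⟩, ha⟩ := IsLocalization.surj T b
  exact ⟨a, (IsLocalization.map_units B t).unit, ha⟩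

/-- Up to units of `B`, fractions of `B` are fractions of `A`. -/
lemma loc_frac (T : Submonoid A) [IsLocalization T B] (x z : B) : ∃ x' z' : A, (x' = 0 → x = 0) ∧
    ∀ y, x ∣ z * algebraMap A B y ↔ ∃ t ∈ T, x' ∣ z' * y * t := by
  obtain ⟨x', hx⟩ := exists_associated T x
  obtain ⟨z', hz⟩ := exists_associated T z
  refine ⟨x', z', fun h => hx.symm.eq_zero_iff.1 (by rw [h, map_zero]), fun y => ?_⟩
  rw [hx.dvd_iff_dvd_left, (hz.mul_right _).dvd_iff_dvd_right, ← map_mul, loc_dvd_iff T]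

lemma mem_of_algebraMap_mem {T : Submonoid A} [IsLocalization T B] {M : Ideal A}
    (hMp : M.IsPrime) (hM : ∀ t ∈ T, t ∉ M) {s : A}
    (hs : algebraMap A B s ∈ M.map (algebraMap A B)) : s ∈ M := by
  obtain ⟨t, ht, h⟩ := (IsLocalization.algebraMap_mem_map_algebraMap_iff T B M s).1 hs
  exact (hMp.mem_or_mem h).resolve_left (hM t ht)

variable [IsDomain A] [IsDomain B]

/-- Contractions of `t`-ideals along a localization are `t`-ideals. -/
lemma isTIdeal_comap (T : Submonoid A) [IsLocalization T B] {J : Ideal B} (hJ : IsTIdeal B J) :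
    IsTIdeal A (J.comap (algebraMap A B)) := by
  refine isTIdeal_iff.2 ⟨fun h => hJ.1 ?_, fun F hF hFJ y hy => ?_⟩
  · rw [← IsLocalization.map_under T B J, Ideal.under_def, h, Ideal.map_bot]
  refine (isTIdeal_iff.1 hJ).2 (algebraMap A B '' F) (hF.image _) ?_ _ fun x z hx h => ?_
  · rintro _ ⟨f, hf, rfl⟩
    exact hFJ hf
  obtain ⟨x', z', hx', hxz⟩ := loc_frac T x z
  have h' : ∀ f ∈ F, ∃ t ∈ T, x' ∣ z' * f * t := fun f hf => (hxz f).1 (h _ ⟨f, hf, rfl⟩)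
  -- a common denominator for the finitely many elements of `F`
  have hcommon : ∃ t ∈ T, ∀ f ∈ F, x' ∣ z' * f * t := by
    clear hFJ hy h
    induction F, hF using Set.Finite.induction_on with
    | empty => exact ⟨1, T.one_mem, by simp⟩
    | @insert a s _ _ ih =>
      obtain ⟨t, ht, hs⟩ := ih fun f hf => h' f (Set.mem_insert_of_mem _ hf)
      obtain ⟨t', ht', ha⟩ := h' a (Set.mem_insert a _)
      refine ⟨t * t', T.mul_mem ht ht', ?_⟩
      rintro f (rfl | hf)
      · rw [mul_comm t, ← mul_assoc]; exact ha.mul_right t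
      · rw [← mul_assoc]; exact (hs f hf).mul_right t'
  obtain ⟨t, ht, hF'⟩ := hcommon
  refine (hxz y).2 ⟨t, ht, ?_⟩
  have := hy x' (z' * t) (fun h0 => hx (hx' h0)) fun f hf => by
    rw [mul_right_comm]; exact hF' f hf
  rwa [mul_right_comm]

/-- If the maximal `t`-ideals of `A` disjoint from `T` extend to `t`-ideals of `B = T⁻¹A` (`H₁`) and
every prime `t`-ideal disjoint from `T` lies in one of them (`H₂`), then these extensions are the
maximal `t`-ideals of `B`, and the localizations of `A` and of `B` at them are the same. Hence the
`t#`-property of `B` is a statement about `A`. -/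
theorem isTSharp_localization {T : Submonoid A} [IsLocalization T B] (hT : (0 : A) ∉ T)
    (H₁ : ∀ Q ∈ tMaxOff T, ∀ F : Set A, F.Finite → F ⊆ Q → ∀ y,
      (∀ x z, x ≠ 0 → (∀ f ∈ F, x ∣ z * f) → ∃ t ∈ T, x ∣ z * y * t) → y ∈ Q)
    (H₂ : ∀ J : Ideal A, J.IsPrime → IsTIdeal A J → (∀ t ∈ T, t ∉ J) →
      ∃ Q ∈ tMaxOff T, J ≤ Q) :
    IsTSharp B ↔ ∀ Q ∈ tMaxOff T, SharpAt (tMaxOff T) Q := by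
  have hTn : T ≤ nonZeroDivisors A := le_nonZeroDivisors_of_noZeroDivisors hT
  have hinj : Function.Injective (algebraMap A B) := IsLocalization.injective B hTn
  have hcomap : ∀ {M : Ideal A}, M.IsPrime → (∀ t ∈ T, t ∉ M) →
      (M.map (algebraMap A B)).comap (algebraMap A B) = M := fun {M} hMp hM =>
    le_antisymm (fun _ hs => mem_of_algebraMap_mem hMp hM hs) Ideal.le_comap_map
  have hmap : ∀ Q ∈ tMaxOff T, IsTIdeal B (Q.map (algebraMap A B)) := by
    intro Q hQ
    have hQp := (tMax_isPrime hQ.1)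
    refine isTIdeal_iff.2 ⟨fun h => ?_, fun F hF hFQ y hy => ?_⟩
    · obtain ⟨q, hq, hq0⟩ := Submodule.exists_mem_ne_zero_of_ne_bot hQ.1.1.1
      have := Ideal.mem_map_of_mem (algebraMap A B) hq
      rw [h, Ideal.mem_bot] at this
      exact hq0 (hinj (by rw [this, map_zero]))
    · choose φ hφ using fun b : B => exists_associated T b
      have hy' : φ y ∈ Q := by
        refine H₁ Q hQ (φ '' F) (hF.image φ) ?_ (φ y) fun x z hx h => ?_
        · rintro _ ⟨f, hf, rfl⟩
          refine mem_of_algebraMap_mem (T := T) (B := B) hQp hQ.2 ?_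
          exact (Ideal.mem_iff_of_associated (hφ f)).1 (hFQ hf)
        · rw [← loc_dvd_iff (B := B) T, map_mul,
            ← ((hφ y).mul_left _).dvd_iff_dvd_right]
          refine hy _ _ (fun h0 => hx (hinj (by rw [h0, map_zero]))) fun f hf => ?_
          rw [((hφ f).mul_left _).dvd_iff_dvd_right, ← map_mul]
          exact map_dvd _ (h _ ⟨f, hf, rfl⟩)
      exact (Ideal.mem_iff_of_associated (hφ y)).2 (Ideal.mem_map_of_mem _ hy')
  have hne : ∀ Q ∈ tMaxOff T, Q.map (algebraMap A B) ≠ ⊤ := fun Q hQ h => by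
    have := hcomap (tMax_isPrime hQ.1) hQ.2
    rw [h, Ideal.comap_top] at this
    exact hQ.1.2.1 this.symm
  have hmem : ∀ Q ∈ tMaxOff T, Q.map (algebraMap A B) ∈ tMax B := by
    refine fun Q hQ => ⟨hmap Q hQ, hne Q hQ, fun J hJ hJ1 hQJ => le_antisymm ?_ hQJ⟩
    obtain ⟨J', hJ', hJJ'⟩ := exists_le_tMax hJ hJ1
    have hJp := (tMax_isPrime hJ')
    obtain ⟨Q', hQ', hJQ⟩ := H₂ (J'.comap (algebraMap A B)) (Ideal.comap_isPrime _ _)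
      (isTIdeal_comap T hJ'.1)
      fun t ht h => hJp.ne_top (Ideal.eq_top_of_isUnit_mem _ h
        (IsLocalization.map_units B (⟨t, ht⟩ : T)))
    have hle : Q ≤ Q' := (Ideal.map_le_iff_le_comap.1 (hQJ.trans hJJ')).trans hJQ
    have heq : Q' = Q := hQ.1.2.2 Q' hQ'.1.1 hQ'.1.2.1 hle
    rw [heq] at hJQ
    rw [← IsLocalization.map_under T B J, Ideal.under_def]
    exact Ideal.map_mono ((Ideal.comap_mono hJJ').trans hJQ)
  have hsurj : ∀ J ∈ tMax B, ∃ Q ∈ tMaxOff T, Q.map (algebraMap A B) = J := by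
    intro J hJ
    have hJp := (tMax_isPrime hJ)
    obtain ⟨Q, hQ, hJQ⟩ := H₂ (J.comap (algebraMap A B)) (Ideal.comap_isPrime _ _)
      (isTIdeal_comap T hJ.1)
      fun t ht h => hJp.ne_top (Ideal.eq_top_of_isUnit_mem _ h
        (IsLocalization.map_units B (⟨t, ht⟩ : T)))
    refine ⟨Q, hQ, hJ.2.2 _ (hmap Q hQ) (hne Q hQ) ?_⟩
    rw [← IsLocalization.map_under T B J, Ideal.under_def]
    exact Ideal.map_mono hJQ
  rw [isTSharp_iff]
  constructor
  · intro h Q hQ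
    obtain ⟨x, z, hx, hxQ, hN⟩ := h _ (hmem Q hQ)
    obtain ⟨x', z', hx', hxz⟩ := loc_frac T x z
    refine ⟨x', z', fun h0 => hx (hx' h0), fun s hs => ?_, fun N hN₁ hNQ => ?_⟩
    · exact mem_of_algebraMap_mem (tMax_isPrime hQ.1) hQ.2
        (hxQ _ ((hxz s).2 ⟨1, T.one_mem, by rwa [mul_one]⟩))
    · obtain ⟨b, hb, hxb⟩ := hN _ (hmem N hN₁) fun h => hNQ <| by
        rw [← hcomap (tMax_isPrime hN₁.1) hN₁.2, h, hcomap (tMax_isPrime hQ.1) hQ.2]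
      obtain ⟨s, hs⟩ := exists_associated T b
      rw [(hs.mul_left _).dvd_iff_dvd_right, hxz] at hxb
      obtain ⟨t, ht, hst⟩ := hxb
      refine ⟨s * t, fun h => ?_, by rwa [← mul_assoc]⟩
      refine hb ((Ideal.mem_iff_of_associated hs).2 (Ideal.mem_map_of_mem _ ?_))
      exact ((tMax_isPrime hN₁.1).mem_or_mem h).resolve_right (hN₁.2 t ht)
  · intro h J hJ
    obtain ⟨Q, hQ, rfl⟩ := hsurj J hJ
    obtain ⟨x, z, hx, hxQ, hN⟩ := h Q hQ
    refine ⟨algebraMap A B x, algebraMap A B z, fun h0 => hx (hinj (by rw [h0, map_zero])),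
      fun b hb => ?_, fun N hN₁ hNQ => ?_⟩
    · obtain ⟨s, hs⟩ := exists_associated T b
      rw [(hs.mul_left _).dvd_iff_dvd_right, ← map_mul, loc_dvd_iff T] at hb
      obtain ⟨t, ht, hst⟩ := hb
      rw [mul_assoc] at hst
      exact (Ideal.mem_iff_of_associated hs).2 (Ideal.mem_map_of_mem _
        (((tMax_isPrime hQ.1).mem_or_mem (hxQ _ hst)).resolve_right (hQ.2 t ht)))
    · obtain ⟨Q', hQ', rfl⟩ := hsurj N hN₁
      obtain ⟨s, hs, hxs⟩ := hN Q' hQ' fun h => hNQ (by rw [h])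
      refine ⟨algebraMap A B s,
        fun h => hs (mem_of_algebraMap_mem (tMax_isPrime hQ'.1) hQ'.2 h), ?_⟩
      rw [← map_mul]
      exact map_dvd _ hxs

end Localize

section McCoy

/-! ### McCoy's theorem -/

open MvPolynomial

/-- McCoy's theorem in several variables: a zero divisor of a polynomial ring is killed by a nonzero
constant. -/
lemma mccoy {A τ : Type*} [CommRing A] {f h : MvPolynomial τ A} (hh : h ≠ 0) (hfh : f * h = 0) :
    ∃ c : A, c ≠ 0 ∧ ∀ i, coeff i f * c = 0 := by
  classical
  obtain ⟨_, _⟩ := exists_wellFoundedGT τ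
  let m : MonomialOrder τ := MonomialOrder.lex
  induction hn : h.support.card using Nat.strong_induction_on generalizing h with
  | _ n ih =>
  subst hn
  by_cases hall : ∀ i, C (coeff i f) * h = 0
  · -- any nonzero coefficient of `h` works
    refine ⟨m.leadingCoeff h, m.leadingCoeff_ne_zero_iff.2 hh, fun i => ?_⟩
    have := congrArg (coeff (m.degree h)) (hall i)
    rwa [coeff_C_mul, coeff_zero] at this
  -- `i` is the largest exponent of `f` whose coefficient does not kill `h`
  have hne : (f.support.filter fun i => C (coeff i f) * h ≠ 0).Nonempty := by
    push Not at hall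
    obtain ⟨i, hi⟩ := hall
    refine ⟨i, Finset.mem_filter.2 ⟨mem_support_iff.2 fun h0 => hi (by simp [h0]), hi⟩⟩
  obtain ⟨i, hi, hmax⟩ := Finset.exists_max_image _ m.toSyn hne
  have hih := (Finset.mem_filter.1 hi).2
  -- truncating `f` above `i` does not change the product with `h`
  set g : MvPolynomial τ A :=
    ∑ j ∈ f.support.filter (fun j => m.toSyn j ≤ m.toSyn i), monomial j (coeff j f) with hg
  have hgh : g * h = 0 := by
    have hsplit : f = g + ∑ j ∈ f.support.filter (fun j => ¬ m.toSyn j ≤ m.toSyn i),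
        monomial j (coeff j f) := by
      rw [hg, Finset.sum_filter_add_sum_filter_not]
      exact f.as_sum
    have hrest : (∑ j ∈ f.support.filter (fun j => ¬ m.toSyn j ≤ m.toSyn i),
        monomial j (coeff j f)) * h = 0 := by
      rw [Finset.sum_mul]
      refine Finset.sum_eq_zero fun j hj => ?_
      obtain ⟨hj₁, hj₂⟩ := Finset.mem_filter.1 hj
      have hjh : C (coeff j f) * h = 0 := by
        by_contra h0
        exact hj₂ (hmax j (Finset.mem_filter.2 ⟨hj₁, h0⟩))
      rw [← mul_one (coeff j f), ← C_mul_monomial, mul_right_comm, hjh, zero_mul]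
    rw [hsplit, add_mul, hrest, add_zero] at hfh
    exact hfh
  have hdeg : m.toSyn (m.degree g) ≤ m.toSyn i := by
    rw [m.degree_le_iff]
    intro j hj
    by_contra hji
    refine mem_support_iff.1 hj ?_
    rw [hg, coeff_sum]
    refine Finset.sum_eq_zero fun k hk => ?_
    rw [coeff_monomial, if_neg]
    rintro rfl
    exact hji (Finset.mem_filter.1 hk).2
  have hgi : coeff i g = coeff i f := by
    rw [hg, coeff_sum, Finset.sum_eq_single i]
    · simp
    · intro k _ hki
      rw [coeff_monomial, if_neg hki]
    · intro h0
      exact (h0 (Finset.mem_filter.2 ⟨(Finset.mem_filter.1 hi).1, le_refl (m.toSyn i)⟩)).elim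
  have hlead : coeff i f * coeff (m.degree h) h = 0 := by
    rw [← hgi, ← m.coeff_mul_of_add_of_degree_le hdeg le_rfl, hgh, coeff_zero]
  -- so multiplying `h` by the `i`-th coefficient of `f` removes its leading term
  refine ih _ (Finset.card_lt_card ⟨fun j hj => ?_, fun hsub => ?_⟩) hih
    (by rw [mul_left_comm, hfh, mul_zero]) rfl
  · rw [mem_support_iff, coeff_C_mul] at hj
    exact mem_support_iff.2 (right_ne_zero_of_mul hj)
  · have := hsub (m.degree_mem_support hh)
    rw [mem_support_iff, coeff_C_mul] at this
    exact this hlead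

end McCoy

section Polynomial

/-! ### Polynomials of trivial `v`-content -/

open MvPolynomial

variable {R} [IsDomain R]

omit [IsDomain R] in
lemma finite_range_coeff (f : MvPolynomial σ R) : (Set.range fun m => coeff m f).Finite := by
  refine ((f.support.finite_toSet.image fun m => coeff m f).insert 0).subset ?_
  rintro _ ⟨m, rfl⟩
  by_cases hm : m ∈ f.support
  · exact Or.inr ⟨m, hm, rfl⟩
  · exact Or.inl (notMem_support_iff.1 hm)

variable (R σ) in
/-- The nonzero `s ∈ R[X]` such that `h ∈ K[X]` and `s * h ∈ R[X]` imply `h ∈ R[X]`. These are the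
nonzero polynomials with `c(s)_v = R`. -/
def regularContent : Submonoid (MvPolynomial σ R) where
  carrier := {s | s ≠ 0 ∧ ∀ a : R, a ≠ 0 → ∀ h, C a ∣ s * h → C a ∣ h}
  one_mem' := ⟨one_ne_zero, fun a _ h => by rw [one_mul]; exact id⟩
  mul_mem' := by
    rintro s t ⟨hs, hs'⟩ ⟨ht, ht'⟩
    refine ⟨mul_ne_zero hs ht, fun a ha h hd => ht' a ha h (hs' a ha _ ?_)⟩
    rwa [← mul_assoc]

/-- This is McCoy's theorem over `R / a`. -/
lemma mem_regularContent {f : MvPolynomial σ R} (hf : f ≠ 0)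
    (h1 : VMem (Set.range fun m => coeff m f) 1) : f ∈ regularContent R σ := by
  refine ⟨hf, fun a ha h hd => ?_⟩
  have hq : ∀ r, Ideal.Quotient.mk (Ideal.span {a}) r = 0 ↔ a ∣ r := fun r => by
    rw [Ideal.Quotient.eq_zero_iff_mem, Ideal.mem_span_singleton]
  rw [C_dvd_iff_map_hom_eq_zero _ _ hq] at hd ⊢
  by_contra hh
  rw [map_mul] at hd
  obtain ⟨c, hc, hfc⟩ := mccoy hh hd
  obtain ⟨c, rfl⟩ := Ideal.Quotient.mk_surjective c
  refine hc ((hq c).2 ?_)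
  rw [← mul_one c]
  refine h1 a c ha ?_
  rintro _ ⟨m, rfl⟩
  have := hfc m
  rwa [coeff_map, ← map_mul, hq, mul_comm] at this

lemma mem_regularContent_of_subset {f : MvPolynomial σ R} (hf : f ≠ 0) {G : Set R}
    (hG : G ⊆ mvContent R f) (h1 : VMem G 1) : f ∈ regularContent R σ :=
  mem_regularContent hf (h1.trans fun _ hg => vMem_of_mem_span (hG hg))

/-- A fraction `z / x` lying in `K[X]` and in `s⁻¹ R[X]` lies in `R[X]`. -/
lemma dvd_of_regular {s : MvPolynomial σ R} (hs : s ∈ regularContent R σ) {a : R} (ha : a ≠ 0)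
    {x z : MvPolynomial σ R} (hx : x ≠ 0) (h₁ : x ∣ C a * z) (h₂ : x ∣ s * z) : x ∣ z := by
  obtain ⟨w, hw⟩ := h₁
  obtain ⟨v, hv⟩ := h₂
  have h : C a * v = s * w := mul_left_cancel₀ hx (by linear_combination s * hw - C a * hv)
  obtain ⟨w', rfl⟩ := hs.2 a ha w ⟨v, h.symm⟩
  have hCa : (C a : MvPolynomial σ R) ≠ 0 := by simpa using ha
  exact ⟨w', mul_left_cancel₀ hCa (by linear_combination hw)⟩

attribute [local instance] MvPolynomial.algebraMvPolynomial

local notation "K[X]" => MvPolynomial σ (FractionRing R)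

omit [IsDomain R] in
lemma exists_associated_map (g : K[X]) :
    ∃ f : MvPolynomial σ R, Associated g (algebraMap (MvPolynomial σ R) K[X] f) :=
  exists_associated ((nonZeroDivisors R).map (C (σ := σ))) g

lemma map_dvd_map_iff {x y : MvPolynomial σ R} :
    algebraMap (MvPolynomial σ R) K[X] x ∣ algebraMap (MvPolynomial σ R) K[X] y ↔
      ∃ a : R, a ≠ 0 ∧ x ∣ C a * y := by
  rw [loc_dvd_iff ((nonZeroDivisors R).map (C (σ := σ)))]
  constructor
  · rintro ⟨_, ⟨a, ha, rfl⟩, h⟩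
    exact ⟨a, nonZeroDivisors.ne_zero ha, by rwa [mul_comm]⟩
  · rintro ⟨a, ha, h⟩
    exact ⟨C a, ⟨a, mem_nonZeroDivisors_of_ne_zero ha, rfl⟩, by rwa [mul_comm]⟩

omit [IsDomain R] in
lemma map_eq_zero_iff' {x : MvPolynomial σ R} :
    algebraMap (MvPolynomial σ R) K[X] x = 0 ↔ x = 0 := by
  rw [algebraMap_def]
  exact map_eq_zero_iff _ (map_injective _ (IsFractionRing.injective R (FractionRing R)))

section Upper

/-! ### `t`-primes meeting `regularContent` -/

variable {Q : Ideal (MvPolynomial σ R)} (hQp : Q.IsPrime) (hQ : IsTIdeal (MvPolynomial σ R) Q)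
  {s : MvPolynomial σ R} (hsQ : s ∈ Q) (hs : s ∈ regularContent R σ)

include hQp hQ hsQ hs

/-- Such a prime is an upper to zero, because `(a, s)_v = R[X]` for all nonzero `a ∈ R`. -/
lemma C_notMem {a : R} (ha : a ≠ 0) : C a ∉ Q := by
  intro haQ
  refine hQp.ne_top ((Ideal.eq_top_iff_one Q).2 ((isTIdeal_iff.1 hQ).2 {C a, s} (by simp)
    (Set.insert_subset haQ (Set.singleton_subset_iff.2 hsQ)) 1 fun x z hx h => ?_))
  rw [mul_one]
  refine dvd_of_regular hs ha hx ?_ ?_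
  · rw [mul_comm]; exact h _ (by simp)
  · rw [mul_comm]; exact h _ (by simp)

/-- `Q` extends to a nonzero prime ideal of the factorial ring `K[X]`. -/
lemma exists_prime_mem : ∃ p ∈ Q, Prime (algebraMap (MvPolynomial σ R) K[X] p) := by
  have hdisj : ∀ t ∈ (nonZeroDivisors R).map (C (σ := σ)), t ∉ Q := by
    rintro _ ⟨a, ha, rfl⟩
    exact C_notMem hQp hQ hsQ hs (nonZeroDivisors.ne_zero ha)
  have hprime : (Q.map (algebraMap (MvPolynomial σ R) K[X])).IsPrime :=
    IsLocalization.isPrime_of_isPrime_disjoint ((nonZeroDivisors R).map (C (σ := σ))) _ Q hQp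
      (Set.disjoint_left.2 hdisj)
  obtain ⟨x, hx, hxp⟩ := hprime.exists_mem_prime_of_ne_bot fun h => by
    have := Ideal.mem_map_of_mem (algebraMap (MvPolynomial σ R) K[X]) hsQ
    rw [h, Ideal.mem_bot, map_eq_zero_iff'] at this
    exact hs.1 this
  obtain ⟨p, hp⟩ := exists_associated_map x
  exact ⟨p, mem_of_algebraMap_mem (B := K[X]) hQp hdisj ((Ideal.mem_iff_of_associated hp).1 hx),
    hp.prime hxp⟩

/-- If `p ∈ Q` is prime in `K[X]`, then `Q = p K[X] ∩ R[X]`: for `f ∈ Q` not divisible by `p`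
one would have `(f, p, s)_v = R[X]`. -/
lemma mem_iff_dvd {p : MvPolynomial σ R} (hpQ : p ∈ Q)
    (hp : Prime (algebraMap (MvPolynomial σ R) K[X] p)) {f : MvPolynomial σ R} :
    f ∈ Q ↔ algebraMap (MvPolynomial σ R) K[X] p ∣ algebraMap (MvPolynomial σ R) K[X] f := by
  constructor
  · intro hf
    by_contra hpf
    refine hQp.ne_top ((Ideal.eq_top_iff_one Q).2 ((isTIdeal_iff.1 hQ).2 {f, p, s} (by simp)
      (Set.insert_subset hf (Set.insert_subset hpQ (Set.singleton_subset_iff.2 hsQ))) 1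
      fun x z hx h => ?_))
    rw [mul_one]
    have hx' : algebraMap (MvPolynomial σ R) K[X] x ≠ 0 := fun h0 => hx (map_eq_zero_iff'.1 h0)
    have hxz : algebraMap (MvPolynomial σ R) K[X] x ∣ algebraMap (MvPolynomial σ R) K[X] z := by
      have hzf := map_dvd (algebraMap (MvPolynomial σ R) K[X]) (h f (by simp))
      have hzp := map_dvd (algebraMap (MvPolynomial σ R) K[X]) (h p (by simp))
      rw [map_mul] at hzf hzp
      obtain ⟨w, hw⟩ := hzp
      rcases hp.dvd_or_dvd (Dvd.intro_left _ hw) with hpx | ⟨w', rfl⟩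
      · obtain ⟨x', hx₀⟩ := hpx
        rw [hx₀] at hw hzf hx' ⊢
        have hz : algebraMap (MvPolynomial σ R) K[X] z = x' * w :=
          mul_left_cancel₀ hp.ne_zero (by linear_combination hw)
        obtain ⟨v, hv⟩ := hzf
        have hpwf : algebraMap (MvPolynomial σ R) K[X] p ∣
            w * algebraMap (MvPolynomial σ R) K[X] f :=
          ⟨v, mul_left_cancel₀ (right_ne_zero_of_mul hx') (by
            rw [hz] at hv; linear_combination hv)⟩
        obtain ⟨w', rfl⟩ := (hp.dvd_or_dvd hpwf).resolve_right hpf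
        exact ⟨w', by rw [hz]; ring⟩
      · exact ⟨w', mul_left_cancel₀ hp.ne_zero (by linear_combination hw)⟩
    obtain ⟨a, ha, hax⟩ := map_dvd_map_iff.1 hxz
    refine dvd_of_regular hs ha hx hax ?_
    rw [mul_comm]
    exact h s (by simp)
  · intro h
    obtain ⟨a, ha, hpa⟩ := map_dvd_map_iff.1 h
    exact (hQp.mem_or_mem (Q.mem_of_dvd hpa hpQ)).resolve_left (C_notMem hQp hQ hsQ hs ha)

lemma eq_of_prime_mem {N : Ideal (MvPolynomial σ R)} (hNp : N.IsPrime)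
    (hN : IsTIdeal (MvPolynomial σ R) N) {s' : MvPolynomial σ R} (hsN : s' ∈ N)
    (hs' : s' ∈ regularContent R σ) {p : MvPolynomial σ R} (hpQ : p ∈ Q) (hpN : p ∈ N)
    (hp : Prime (algebraMap (MvPolynomial σ R) K[X] p)) : N = Q := by
  ext f
  rw [mem_iff_dvd hQp hQ hsQ hs hpQ hp, mem_iff_dvd hNp hN hsN hs' hpN hp]

/-- There are no inclusions between such primes, and no larger ideal avoids `regularContent`. -/
lemma mem_tMax_of_upper : Q ∈ tMax (MvPolynomial σ R) := by
  refine ⟨hQ, hQp.ne_top, fun J hJ hJ1 hQJ => le_antisymm ?_ hQJ⟩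
  obtain ⟨N, hN, hJN⟩ := exists_le_tMax hJ hJ1
  obtain ⟨p, hpQ, hp⟩ := exists_prime_mem hQp hQ hsQ hs
  rw [← eq_of_prime_mem hQp hQ hsQ hs (tMax_isPrime hN) hN.1 (hJN (hQJ hsQ)) hs hpQ
    (hJN (hQJ hpQ)) hp]
  exact hJN

end Upper

section Extended

/-! ### Extensions of `t`-ideals of `R` -/

/-- `M[X]` is closed under the `v`-closure of finite sets computed in `T⁻¹ R[X]`. -/
lemma mem_map_of_vMem {M : Ideal R} (hM : IsTIdeal R M) {T : Submonoid (MvPolynomial σ R)}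
    (hT : T ≤ regularContent R σ) (F : Set (MvPolynomial σ R)) (hF : F.Finite)
    (hFM : F ⊆ M.map (C (σ := σ))) (y : MvPolynomial σ R)
    (hy : ∀ x z, x ≠ 0 → (∀ f ∈ F, x ∣ z * f) → ∃ t ∈ T, x ∣ z * y * t) :
    y ∈ M.map (C (σ := σ)) := by
  refine mem_map_C_iff.2 fun m => (isTIdeal_iff.1 hM).2
    (⋃ f ∈ F, Set.range fun m => coeff m f) (hF.biUnion fun f _ => finite_range_coeff f) ?_ _
    fun x z hx h => ?_
  · refine Set.iUnion₂_subset fun f hf => ?_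
    rintro _ ⟨n, rfl⟩
    exact mem_map_C_iff.1 (hFM hf) n
  · obtain ⟨t, ht, hd⟩ := hy (C x) (C z) (by simpa using hx) fun f hf => by
      rw [C_dvd_iff_dvd_coeff]
      intro n
      rw [coeff_C_mul]
      exact h _ (Set.mem_biUnion hf ⟨n, rfl⟩)
    rw [mul_comm] at hd
    have := (C_dvd_iff_dvd_coeff _ _).1 ((hT ht).2 x hx _ hd) m
    rwa [coeff_C_mul] at this

lemma notMem_map_of_regular {M : Ideal R} (hM : IsTIdeal R M) (hM1 : M ≠ ⊤)
    {s : MvPolynomial σ R} (hs : s ∈ regularContent R σ) : s ∉ M.map (C (σ := σ)) := by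
  intro hsM
  refine hM1 ((Ideal.eq_top_iff_one M).2 ((isTIdeal_iff.1 hM).2 _ (finite_range_coeff s) ?_ 1
    fun x z hx h => ?_))
  · rintro _ ⟨n, rfl⟩
    exact mem_map_C_iff.1 hsM n
  · rw [mul_one]
    have hd : C x ∣ s * C z := by
      rw [C_dvd_iff_dvd_coeff]
      intro n
      rw [mul_comm, coeff_C_mul]
      exact h _ ⟨n, rfl⟩
    simpa using (C_dvd_iff_dvd_coeff _ _).1 (hs.2 x hx _ hd) 0

lemma isTIdeal_map {M : Ideal R} (hM : IsTIdeal R M) :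
    IsTIdeal (MvPolynomial σ R) (M.map (C (σ := σ))) := by
  refine isTIdeal_iff.2 ⟨fun h => hM.1 ((Ideal.map_eq_bot_iff_of_injective
    (C_injective σ R)).1 h), fun F hF hFM y hy => ?_⟩
  exact mem_map_of_vMem hM (bot_le (a := regularContent R σ)) F hF hFM y fun x z hx h =>
    ⟨1, Submonoid.one_mem _, by rw [mul_one]; exact hy x z hx h⟩

omit [IsDomain R] in
/-- The contents of two members of an ideal of `R[X]` are contained in the content of a third one:
shift one of the polynomials by a large power of a variable and add. -/
lemma exists_content_le (i : σ) (f g : MvPolynomial σ R) :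
    ∃ e : MvPolynomial σ R, mvContent R f ≤ mvContent R (f + e * g) ∧
      mvContent R g ≤ mvContent R (f + e * g) := by
  classical
  set k : σ →₀ ℕ := Finsupp.single i (degreeOf i f + 1) with hk
  have hf : ∀ m, k ≤ m → coeff m f = 0 := fun m hm => by
    by_contra h0
    have h₁ := monomial_le_degreeOf i (mem_support_iff.2 h0)
    have h₂ := hm i
    rw [hk, Finsupp.single_eq_same] at h₂
    omega
  refine ⟨monomial k 1, Ideal.span_le.2 ?_, Ideal.span_le.2 ?_⟩
  · rintro _ ⟨m, rfl⟩
    by_cases hm : k ≤ m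
    · simp only [hf m hm]
      exact zero_mem _
    · refine Ideal.subset_span ⟨m, ?_⟩
      simp only [coeff_add, coeff_monomial_mul', if_neg hm, add_zero]
  · rintro _ ⟨m, rfl⟩
    refine Ideal.subset_span ⟨k + m, ?_⟩
    simp only [coeff_add, coeff_monomial_mul, one_mul, hf (k + m) le_self_add, zero_add]

/-- A proper `t`-ideal `Q` of `R[X]` disjoint from `regularContent` lies in the extension of a
maximal `t`-ideal of `R`, because finitely many coefficients of members of `Q` are coefficients of a single
member of `Q`. -/
lemma exists_le_map {Q : Ideal (MvPolynomial σ R)} (hQ : IsTIdeal (MvPolynomial σ R) Q)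
    (hQ1 : Q ≠ ⊤) (hQS : ∀ s ∈ regularContent R σ, s ∉ Q) :
    ∃ M ∈ tMax R, Q ≤ M.map (C (σ := σ)) := by
  obtain ⟨q, hqQ, hq⟩ := Submodule.exists_mem_ne_zero_of_ne_bot hQ.1
  have hcoeff : ∀ (f : MvPolynomial σ R) m, coeff m f ∈ mvContent R f := fun f m =>
    Ideal.subset_span ⟨m, rfl⟩
  obtain ⟨M, hM, hWM⟩ := exists_tMax_of_set {c : R | ∃ f ∈ Q, c ∈ mvContent R f} (by
      obtain ⟨m, hm⟩ := ne_zero_iff.1 hq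
      exact ⟨_, ⟨q, hqQ, hcoeff q m⟩, hm⟩) (by
    intro G hG hGW hG1
    rcases isEmpty_or_nonempty σ with hσ | ⟨⟨i⟩⟩
    · -- without variables `R[X]` is just `R`
      have hC : ∀ f : MvPolynomial σ R, ∃ c, f = C c := fun f => ⟨_, eq_C_of_isEmpty f⟩
      refine hQ1 ((Ideal.eq_top_iff_one Q).2 ((isTIdeal_iff.1 hQ).2 (C '' G) (hG.image _) ?_ 1
        fun x z hx h => ?_))
      · rintro _ ⟨c, hc, rfl⟩
        obtain ⟨f, hf, hcf⟩ := hGW hc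
        obtain ⟨b, rfl⟩ := hC f
        refine Q.mem_of_dvd ?_ hf
        refine map_dvd C (Ideal.mem_span_singleton.1 (Ideal.span_le.2 ?_ hcf))
        rintro _ ⟨m, rfl⟩
        have hm : m = 0 := Subsingleton.elim _ _
        simp [hm]
      · obtain ⟨x, rfl⟩ := hC x
        obtain ⟨z, rfl⟩ := hC z
        have := hG1 x z (by simpa using hx) fun g hg => by
          have := (C_dvd_iff_dvd_coeff _ _).1 (h _ ⟨g, hg, rfl⟩) 0
          rwa [← C_mul, coeff_C, if_pos rfl] at this
        have := map_dvd (C (σ := σ)) this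
        rwa [C_mul, C_1] at this
    · have : ∃ h ∈ Q, mvContent R q ≤ mvContent R h ∧ G ⊆ mvContent R h := by
        clear hG1
        induction G, hG using Set.Finite.induction_on with
        | empty => exact ⟨q, hqQ, le_rfl, Set.empty_subset _⟩
        | @insert c G _ _ ih =>
          obtain ⟨h, hh, hqh, hGh⟩ := ih fun _ hb => hGW (Set.mem_insert_of_mem _ hb)
          obtain ⟨f, hf, hcf⟩ := hGW (Set.mem_insert c _)
          obtain ⟨e, h₁, h₂⟩ := exists_content_le i h f
          exact ⟨h + e * f, Q.add_mem hh (Q.mul_mem_left e hf), hqh.trans h₁,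
            Set.insert_subset (h₂ hcf) fun _ hb => h₁ (hGh hb)⟩
      obtain ⟨h, hh, hqh, hGh⟩ := this
      refine hQS h (mem_regularContent_of_subset (fun h0 => ?_) hGh hG1) hh
      obtain ⟨m, hm⟩ := ne_zero_iff.1 hq
      have := hqh (hcoeff q m)
      simp only [mvContent, h0, coeff_zero, Set.range_const, Ideal.span_singleton_eq_bot.2,
        Ideal.mem_bot] at this
      exact hm this)
  exact ⟨M, hM, fun f hf => mem_map_C_iff.2 fun m => hWM ⟨f, hf, hcoeff f m⟩⟩

/-- The extension `M[X]` of a maximal `t`-ideal of `R` is a maximal `t`-ideal of `R[X]`. -/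
lemma map_mem_tMax {M : Ideal R} (hM : M ∈ tMax R) :
    M.map (C (σ := σ)) ∈ tMax (MvPolynomial σ R) := by
  refine ⟨isTIdeal_map hM.1, fun h => notMem_map_of_regular hM.1 hM.2.1
    (regularContent R σ).one_mem (h ▸ Submodule.mem_top), fun J hJ hJ1 hMJ => le_antisymm ?_ hMJ⟩
  obtain ⟨N, hN, hJN⟩ := exists_le_tMax hJ hJ1
  obtain ⟨a, haM, ha⟩ := Submodule.exists_mem_ne_zero_of_ne_bot hM.1.1
  obtain ⟨M', hM', hNM'⟩ := exists_le_map hN.1 hN.2.1 fun s hs hsN =>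
    C_notMem (tMax_isPrime hN) hN.1 hsN hs ha (hJN (hMJ (Ideal.mem_map_of_mem C haM)))
  have hle : M ≤ M' := fun b hb => by
    simpa using mem_map_C_iff.1 (hNM' (hJN (hMJ (Ideal.mem_map_of_mem C hb)))) 0
  rw [← hM.2.2 M' hM'.1 hM'.2.1 hle]
  exact hJN.trans hNM'

lemma exists_eq_map {Q : Ideal (MvPolynomial σ R)} (hQ : Q ∈ tMaxOff (regularContent R σ)) :
    ∃ M ∈ tMax R, Q = M.map (C (σ := σ)) := by
  obtain ⟨M, hM, hQM⟩ := exists_le_map hQ.1.1 hQ.1.2.1 hQ.2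
  have hM' := map_mem_tMax (σ := σ) hM
  exact ⟨M, hM, (hQ.1.2.2 _ hM'.1 hM'.2.1 hQM).symm⟩

lemma map_mem_tMaxOff {M : Ideal R} (hM : M ∈ tMax R) :
    M.map (C (σ := σ)) ∈ tMaxOff (regularContent R σ) :=
  ⟨map_mem_tMax hM, fun _ ht => notMem_map_of_regular hM.1 hM.2.1 ht⟩

end Extended

section Comparison

/-! ### Localizations of `R[X]` -/

/-- Every nonzero `x ∈ R[X]` divides a product `s * t` with `s` in `regularContent` and `t` in no
maximal `t`-ideal meeting `regularContent`: distribute the prime factors of `x` in `K[X]`. -/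
lemma exists_dvd_mul {x : MvPolynomial σ R} (hx : x ≠ 0) :
    ∃ s ∈ regularContent R σ, ∃ t, x ∣ s * t ∧
      ∀ N ∈ tMax (MvPolynomial σ R), (∃ s' ∈ regularContent R σ, s' ∈ N) → t ∉ N := by
  have key : ∀ y : K[X], y ≠ 0 → ∃ s ∈ regularContent R σ, ∃ t : MvPolynomial σ R,
      y ∣ algebraMap (MvPolynomial σ R) K[X] s * algebraMap (MvPolynomial σ R) K[X] t ∧
      ∀ N ∈ tMax (MvPolynomial σ R), (∃ s' ∈ regularContent R σ, s' ∈ N) → t ∉ N := by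
    intro y
    induction y using UniqueFactorizationMonoid.induction_on_prime with
    | h₁ => exact fun h => absurd rfl h
    | h₂ y hy =>
      exact fun _ => ⟨1, Submonoid.one_mem _, 1, hy.dvd, fun N hN _ h =>
        hN.2.1 ((Ideal.eq_top_iff_one N).2 h)⟩
    | h₃ y q hy hq ih =>
      intro _
      obtain ⟨s, hs, t, hyst, ht⟩ := ih hy
      obtain ⟨p, hpq⟩ := exists_associated_map q
      by_cases h : ∃ s' ∈ regularContent R σ, q ∣ algebraMap (MvPolynomial σ R) K[X] s'
      · obtain ⟨s', hs', hqs⟩ := h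
        refine ⟨s' * s, Submonoid.mul_mem _ hs' hs, t, ?_, ht⟩
        rw [map_mul, mul_assoc]
        exact mul_dvd_mul hqs hyst
      · refine ⟨s, hs, p * t, ?_, ?_⟩
        · rw [map_mul, mul_left_comm]
          exact mul_dvd_mul hpq.dvd hyst
        · rintro N hN ⟨s', hs', hsN⟩ hpt
          have hpN := ((tMax_isPrime hN).mem_or_mem hpt).resolve_right (ht N hN ⟨s', hs', hsN⟩)
          have hps := (mem_iff_dvd (tMax_isPrime hN) hN.1 hsN hs' hpN (hpq.prime hq)).1 hsN
          exact h ⟨s', hs', hpq.dvd.trans hps⟩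
  obtain ⟨s, hs, t, hd, ht⟩ := key (algebraMap (MvPolynomial σ R) K[X] x)
    fun h => hx (map_eq_zero_iff'.1 h)
  rw [← map_mul, map_dvd_map_iff] at hd
  obtain ⟨a, ha, hxa⟩ := hd
  refine ⟨s, hs, C a * t, by rwa [mul_left_comm], ?_⟩
  rintro N hN ⟨s', hs', hsN⟩ hat
  exact ((tMax_isPrime hN).mem_or_mem hat).elim
    (C_notMem (tMax_isPrime hN) hN.1 hsN hs' ha) (ht N hN ⟨s', hs', hsN⟩)

/-- Every maximal `t`-ideal `Q` meeting `regularContent` can be separated from all others, by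
`C a / p` for a prime `p` of `K[X]` generating `Q K[X]`. The remaining ones are the `M[X]`. -/
lemma forall_sharpAt_iff {T : Submonoid (MvPolynomial σ R)} (hT : T ≤ regularContent R σ) :
    (∀ Q ∈ tMaxOff T, SharpAt (tMaxOff T) Q) ↔
      ∀ Q ∈ tMaxOff (regularContent R σ), SharpAt (tMaxOff (regularContent R σ)) Q := by
  have hsub : tMaxOff (regularContent R σ) ⊆ tMaxOff T := fun Q hQ =>
    ⟨hQ.1, fun t ht => hQ.2 t (hT ht)⟩
  constructor
  · intro h Q hQ
    obtain ⟨x, z, hx, hxQ, hN⟩ := h Q (hsub hQ)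
    exact ⟨x, z, hx, hxQ, fun N hN' => hN N (hsub hN')⟩
  · intro h Q hQ
    by_cases hQS : ∀ s ∈ regularContent R σ, s ∉ Q
    · obtain ⟨x, z, hx, hxQ, hN⟩ := h Q ⟨hQ.1, hQS⟩
      -- multiplying by `s` makes the fraction integral at all ideals meeting `regularContent`
      obtain ⟨s, hs, t, hst, ht⟩ := exists_dvd_mul hx
      refine ⟨x, s * z, hx, fun r hr => ?_, fun N hN₁ hNQ => ?_⟩
      · rw [mul_comm s, mul_assoc] at hr
        exact ((tMax_isPrime hQ.1).mem_or_mem (hxQ _ hr)).resolve_left (hQS s hs)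
      · by_cases hNS : ∀ s ∈ regularContent R σ, s ∉ N
        · obtain ⟨r, hr, hxr⟩ := hN N ⟨hN₁.1, hNS⟩ hNQ
          exact ⟨r, hr, by rw [mul_assoc]; exact hxr.mul_left s⟩
        · push Not at hNS
          exact ⟨t, ht N hN₁.1 hNS, by rw [mul_right_comm]; exact hst.mul_right z⟩
    · push Not at hQS
      obtain ⟨s, hs, hsQ⟩ := hQS
      have hQp := tMax_isPrime hQ.1
      obtain ⟨p, hpQ, hp⟩ := exists_prime_mem hQp hQ.1.1 hsQ hs
      obtain ⟨a, ha, hpa⟩ := map_dvd_map_iff.1 ((mem_iff_dvd hQp hQ.1.1 hsQ hs hpQ hp).1 hsQ)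
      refine ⟨p, C a, fun h0 => hp.ne_zero (map_eq_zero_iff'.2 h0), fun r hr => ?_,
        fun N hN₁ hNQ => ?_⟩
      · exact (hQp.mem_or_mem (Q.mem_of_dvd hr hpQ)).resolve_left
          (C_notMem hQp hQ.1.1 hsQ hs ha)
      · by_cases hNS : ∀ s ∈ regularContent R σ, s ∉ N
        · exact ⟨s, hNS s hs, hpa⟩
        · push Not at hNS
          obtain ⟨s', hs', hsN⟩ := hNS
          exact ⟨p, fun hpN => hNQ (eq_of_prime_mem hQp hQ.1.1 hsQ hs (tMax_isPrime hN₁.1)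
            hN₁.1.1 hsN hs' hpQ hpN hp), dvd_mul_left p _⟩

/-- For every localization `B` of `R[X]` at polynomials `f` with `c(f)_v = R`, the `t#`-property is
the same condition on the ideals `M[X]`. -/
theorem isTSharp_iff_of_le {T : Submonoid (MvPolynomial σ R)} (hT : T ≤ regularContent R σ)
    (B : Type*) [CommRing B] [IsDomain B] [Algebra (MvPolynomial σ R) B] [IsLocalization T B] :
    IsTSharp B ↔
      ∀ Q ∈ tMaxOff (regularContent R σ), SharpAt (tMaxOff (regularContent R σ)) Q := by
  rw [← forall_sharpAt_iff hT]
  refine isTSharp_localization (T := T) (fun h => (hT h).1 rfl) ?_ ?_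
  · intro Q hQ F hF hFQ y hy
    by_cases hQS : ∀ s ∈ regularContent R σ, s ∉ Q
    · obtain ⟨M, hM, rfl⟩ := exists_eq_map ⟨hQ.1, hQS⟩
      exact mem_map_of_vMem hM.1 hT F hF hFQ y hy
    · push Not at hQS
      obtain ⟨s, hs, hsQ⟩ := hQS
      have hQp := tMax_isPrime hQ.1
      obtain ⟨p, hpQ, hp⟩ := exists_prime_mem hQp hQ.1.1 hsQ hs
      have hcommon : ∃ a : R, a ≠ 0 ∧ ∀ f ∈ F, p ∣ C a * f := by
        clear hy
        induction F, hF using Set.Finite.induction_on with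
        | empty => exact ⟨1, one_ne_zero, by simp⟩
        | @insert f F _ _ ih =>
          obtain ⟨a, ha, haF⟩ := ih fun _ hg => hFQ (Set.mem_insert_of_mem _ hg)
          obtain ⟨b, hb, hbf⟩ := map_dvd_map_iff.1 ((mem_iff_dvd hQp hQ.1.1 hsQ hs hpQ hp).1
            (hFQ (Set.mem_insert f F)))
          refine ⟨a * b, mul_ne_zero ha hb, ?_⟩
          rintro g (rfl | hg)
          · rw [C_mul, mul_assoc]; exact hbf.mul_left _
          · rw [C_mul, mul_right_comm]; exact (haF g hg).mul_right _
      obtain ⟨a, ha, haF⟩ := hcommon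
      obtain ⟨t, ht, hd⟩ := hy p (C a) (fun h0 => hp.ne_zero (map_eq_zero_iff'.2 h0)) haF
      exact (hQp.mem_or_mem (((hQp.mem_or_mem (Q.mem_of_dvd hd hpQ)).resolve_right
        (hQ.2 t ht)))).resolve_left (C_notMem hQp hQ.1.1 hsQ hs ha)
  · intro J hJp hJ hJT
    by_cases hJS : ∀ s ∈ regularContent R σ, s ∉ J
    · obtain ⟨M, hM, hJM⟩ := exists_le_map hJ hJp.ne_top hJS
      have := map_mem_tMaxOff (σ := σ) hM
      exact ⟨_, ⟨this.1, fun t ht => this.2 t (hT ht)⟩, hJM⟩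
    · push Not at hJS
      obtain ⟨s, hs, hsJ⟩ := hJS
      exact ⟨J, ⟨mem_tMax_of_upper hJp hJ hsJ hs, hJT⟩, le_rfl⟩

lemma isTSharp_mvPolynomial_iff : IsTSharp (MvPolynomial σ R) ↔
    ∀ Q ∈ tMaxOff (regularContent R σ), SharpAt (tMaxOff (regularContent R σ)) Q :=
  have : IsLocalization (⊥ : Submonoid (MvPolynomial σ R)) (MvPolynomial σ R) :=
    IsLocalization.self fun _ ht => (Submonoid.mem_bot.1 ht) ▸ isUnit_one
  isTSharp_iff_of_le (bot_le (a := regularContent R σ)) _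

lemma isTSharp_localization_iff {T : Submonoid (MvPolynomial σ R)} (hT : T ≤ regularContent R σ) :
    IsTSharp (Localization T) ↔
      ∀ Q ∈ tMaxOff (regularContent R σ), SharpAt (tMaxOff (regularContent R σ)) Q :=
  have : IsDomain (Localization T) := IsLocalization.isDomain_localization
    fun _ ht => mem_nonZeroDivisors_of_ne_zero (hT ht).1
  isTSharp_iff_of_le hT _

lemma isTSharp_mvNagata_iff : IsTSharp (mvNagata R σ) ↔ IsTSharp (MvPolynomial σ R) := by
  rw [isTSharp_mvPolynomial_iff]
  refine isTSharp_localization_iff (Submonoid.closure_le.2 fun f hf => ?_)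
  have h1 : (1 : R) ∈ mvContent R f := by
    rw [show mvContent R f = ⊤ from hf]; exact Submodule.mem_top
  refine mem_regularContent (fun h0 => ?_) (vMem_of_mem_span h1)
  simp [mvContent, h0] at h1

lemma isTSharp_of_subsingleton {A : Type*} [CommRing A] [Subsingleton A] : IsTSharp A := by
  intro 𝔐₁ 𝔐₂ h₁ h₂ hne
  have hempty : ∀ 𝔐 ⊆ tMax A, 𝔐 = ∅ := fun 𝔐 h => Set.eq_empty_of_forall_notMem fun M hM =>
    (h hM).2.1 (Subsingleton.elim _ _)
  exact absurd ((hempty 𝔐₁ h₁).trans (hempty 𝔐₂ h₂).symm) hne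

lemma isTSharp_mvKronecker_iff : IsTSharp (mvKronecker R σ) ↔ IsTSharp (MvPolynomial σ R) := by
  rw [isTSharp_mvPolynomial_iff]
  by_cases hR : IsField R
  · -- here `0_v = R`, so `R⟨X⟩` is the zero ring, while no maximal `t`-ideal of `R[X]` avoids
    -- `regularContent`
    have h0 : (0 : MvPolynomial σ R) ∈
        Submonoid.closure {f : MvPolynomial σ R | vIdeal R (mvContent R f) = ⊤} := by
      refine Submonoid.subset_closure ((Ideal.eq_top_iff_one _).2 (mem_vIdeal_iff.2
        fun x z hx _ => ?_))
      obtain ⟨y, hy⟩ := hR.mul_inv_cancel hx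
      exact ⟨y * z, by rw [← mul_assoc, hy, one_mul, mul_one]⟩
    have : Subsingleton (mvKronecker R σ) := IsLocalization.subsingleton
      (S := Localization (Submonoid.closure
        {f : MvPolynomial σ R | vIdeal R (mvContent R f) = ⊤})) h0
    refine iff_of_true isTSharp_of_subsingleton fun Q hQ => ?_
    obtain ⟨f, hf, hf0⟩ := Submodule.exists_mem_ne_zero_of_ne_bot hQ.1.1.1
    refine absurd hf (hQ.2 f ⟨hf0, fun a ha h _ => ?_⟩)
    obtain ⟨b, hb⟩ := hR.mul_inv_cancel ha
    exact ⟨C b * h, by rw [← mul_assoc, ← C_mul, hb, C_1, one_mul]⟩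
  · refine isTSharp_localization_iff (Submonoid.closure_le.2 fun f hf => ?_)
    have h1 : VMem (Set.range fun m => coeff m f) 1 := vMem_span.1 <| mem_vIdeal_iff.1 <| by
      change (1 : R) ∈ vIdeal R (mvContent R f)
      rw [show vIdeal R (mvContent R f) = ⊤ from hf]; exact Submodule.mem_top
    refine mem_regularContent (fun h0 => hR ?_) h1
    refine ⟨exists_pair_ne R, mul_comm, fun {x} hx => ?_⟩
    obtain ⟨y, hy⟩ := h1 x 1 hx (by simp [h0])
    exact ⟨y, by rw [← hy, one_mul]⟩

/-- If `z / x` separates `M` in `R`, then it also separates `M[X]` in `R[X]`. -/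
lemma IsTSharp.mvPolynomial (h : IsTSharp R) : IsTSharp (MvPolynomial σ R) := by
  rw [isTSharp_mvPolynomial_iff]
  intro Q hQ
  obtain ⟨M, hM, rfl⟩ := exists_eq_map hQ
  obtain ⟨x, z, hx, hxM, hN⟩ := isTSharp_iff.1 h M hM
  refine ⟨C x, C z, by simpa using hx, fun f hf => mem_map_C_iff.2 fun m => hxM _ ?_,
    fun N hN₁ hNM => ?_⟩
  · rw [C_dvd_iff_dvd_coeff] at hf
    have := hf m
    rwa [coeff_C_mul] at this
  · obtain ⟨M', hM', rfl⟩ := exists_eq_map hN₁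
    obtain ⟨s, hs, hxs⟩ := hN M' hM' fun h => hNM (by rw [h])
    refine ⟨C s, fun h => hs ?_, by rw [← C_mul]; exact map_dvd C hxs⟩
    simpa using mem_map_C_iff.1 h 0

/-- If `M[X]` is separated by `z / x`, then `(R[X] : z / x) = F_v` with `F` finite, and the
coefficients of the members of `F` lie in `M` but in no other maximal `t`-ideal of `R`. -/
lemma isTSharp_of_isVCoherent (hv : IsVCoherent (MvPolynomial σ R))
    (h : IsTSharp (MvPolynomial σ R)) : IsTSharp R := by
  rw [isTSharp_mvPolynomial_iff] at h
  refine isTSharp_iff.2 fun M hM => ?_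
  obtain ⟨x, z, hx, hxM, hN⟩ := h _ (map_mem_tMaxOff hM)
  obtain ⟨F, hF, hFx, hFv⟩ := hv.conductor hx z
  refine sharpAt_of_finite hM (G := ⋃ f ∈ F, Set.range fun m => coeff m f)
    (hF.biUnion fun f _ => finite_range_coeff f) ?_ fun N hN₁ hNM hGN => ?_
  · refine Set.iUnion₂_subset fun f hf => ?_
    rintro _ ⟨n, rfl⟩
    exact mem_map_C_iff.1 (hxM f (hFx f hf)) n
  · obtain ⟨s, hs, hxs⟩ := hN _ (map_mem_tMaxOff hN₁) fun h => hNM <| by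
      have hcomap : ∀ I : Ideal R, (I.map (C (σ := σ))).comap C = I := fun I =>
        le_antisymm (fun a ha => by simpa using mem_map_C_iff.1 ha 0) Ideal.le_comap_map
      rw [← hcomap N, h, hcomap]
    refine hs ((isTIdeal_iff.1 (isTIdeal_map hN₁.1)).2 F hF (fun f hf => ?_) s (hFv s hxs))
    exact mem_map_C_iff.2 fun m => hGN (Set.mem_biUnion hf ⟨m, rfl⟩)

end Comparison

end Polynomial

/-- **Theorem (3.6).**  For an integral domain `R` the following are equivalent:
(1) `R[{X_α}]` is a `t#`-domain; (2) `R({X_α})` is a `t#`-domain; (3) `R⟨{X_α}⟩` is a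
`t#`-domain.  If moreover `R[{X_α}]` is `v`-coherent, these are equivalent to `R` being a
`t#`-domain. -/
theorem tsharp_polynomial_localizations (R : Type*) [CommRing R] [IsDomain R]
    (σ : Type*) :
    ((IsTSharp (MvPolynomial σ R) ↔ IsTSharp (mvNagata R σ)) ∧
      (IsTSharp (mvNagata R σ) ↔ IsTSharp (mvKronecker R σ))) ∧
    (IsVCoherent (MvPolynomial σ R) → (IsTSharp (MvPolynomial σ R) ↔ IsTSharp R)) :=
  ⟨⟨isTSharp_mvNagata_iff.symm, isTSharp_mvNagata_iff.trans isTSharp_mvKronecker_iff.symm⟩,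
    fun hv => ⟨isTSharp_of_isVCoherent hv, IsTSharp.mvPolynomial⟩⟩

end TSharpPaper
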